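/- Let n ≥ 2 and let δ satisfy 0 < δ ≤ 1 if n ≥ 3 and 0 < δ < 1 if n = 2. Let q ∈ C^∞(ℝⁿ∖{0}) be homogeneous of degree zero. There exists a constant C > 0 such that for every Schwartz function f on ℝⁿ, ‖ ( |x|^{δ} q(D_x) − q(D_x) |x|^{δ} ) f ‖_{L²(ℝⁿ)} ≤ C ‖ |x|^{δ} f ‖_{L²(ℝⁿ)}. -/

import Mathlib

open MeasureTheory Real Complex RealInnerProductSpace

noncomputable section

/-- Fourier transform with convention `(2π)^(-n/2) ∫ e^(-ix·ξ) f(x) dx`. -/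
def FT (n : ℕ) (f : EuclideanSpace ℝ (Fin n) → ℂ) (ξ : EuclideanSpace ℝ (Fin n)) : ℂ :=
  ((2 * π) ^ (-(n : ℝ) / 2) : ℝ) •
    ∫ x : EuclideanSpace ℝ (Fin n), Complex.exp (-Complex.I * ((⟪x, ξ⟫ : ℝ) : ℂ)) * f x

/-- Inverse Fourier transform. -/
def IFT (n : ℕ) (F : EuclideanSpace ℝ (Fin n) → ℂ) (x : EuclideanSpace ℝ (Fin n)) : ℂ :=
  ((2 * π) ^ (-(n : ℝ) / 2) : ℝ) •
    ∫ ξ : EuclideanSpace ℝ (Fin n), Complex.exp (Complex.I * ((⟪x, ξ⟫ : ℝ) : ℂ)) * F ξ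

/-- Fourier multiplier with symbol `q`: `q(D_x) f = IFT (q · FT f)`. -/
def mult (n : ℕ) (q : EuclideanSpace ℝ (Fin n) → ℂ) (f : EuclideanSpace ℝ (Fin n) → ℂ) :
    EuclideanSpace ℝ (Fin n) → ℂ :=
  IFT n fun ξ => q ξ * FT n f ξ

section Plancherel

open FourierTransform

theorem eLpNorm_two_sq {α : Type*} [MeasurableSpace α] {μ : Measure α} (f : α → ℂ) :
    eLpNorm f 2 μ ^ 2 = ∫⁻ x, ‖f x‖ₑ ^ 2 ∂μ := by
  rw [eLpNorm_eq_lintegral_rpow_enorm_toReal two_ne_zero ENNReal.ofNat_ne_top, ← ENNReal.rpow_two,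
    ← ENNReal.rpow_mul]
  simp

/-- The integral Fourier transform of an integrable square integrable function agrees almost
everywhere with its `L²` Fourier transform. -/
theorem fourier_toLp_ae_eq {E : Type*} [NormedAddCommGroup E] [InnerProductSpace ℝ E]
    [FiniteDimensional ℝ E] [MeasurableSpace E] [BorelSpace E] {F : E → ℂ}
    (hF : Integrable F) (hF2 : MemLp F 2) :
    (𝓕 (hF2.toLp F) : Lp ℂ 2 (volume : Measure E)) =ᵐ[volume] 𝓕 F := by
  have hcont : Continuous (𝓕 F) :=
    VectorFourier.fourierIntegral_continuous Real.continuous_fourierChar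
      (by exact continuous_inner) hF
  refine ae_eq_of_integral_contDiff_smul_eq
    ((Lp.memLp _).locallyIntegrable (by norm_num)) hcont.locallyIntegrable fun g hg hgs => ?_
  have hgs' : HasCompactSupport (fun x => (g x : ℂ)) := hgs.comp_left Complex.ofReal_zero
  let φ : SchwartzMap E ℂ := hgs'.toSchwartzMap (Complex.ofRealCLM.contDiff.comp hg)
  have hφ : ∀ x, φ x = g x := fun x => rfl
  have h1 := DFunLike.congr_fun (Lp.fourier_toTemperedDistribution_eq (hF2.toLp F)) φ
  rw [TemperedDistribution.fourier_apply, Lp.toTemperedDistribution_apply,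
    Lp.toTemperedDistribution_apply] at h1
  have h2 : ∫ x, (𝓕 φ) x • F x = ∫ x, φ x • (𝓕 F) x :=
    VectorFourier.integral_fourierIntegral_smul_eq_flip Real.continuous_fourierChar
      (by exact continuous_inner) φ.integrable hF |>.trans (by
        simp [Real.fourier_eq, VectorFourier.fourierIntegral, real_inner_comm])
  have h3 : ∫ x, (𝓕 φ) x • (hF2.toLp F) x = ∫ x, (𝓕 φ) x • F x :=
    integral_congr_ae (by filter_upwards [hF2.coeFn_toLp] with x hx; rw [hx])
  rw [h3, h2] at h1
  simpa [hφ] using h1.symm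

/-- Plancherel's theorem for the integral Fourier transform. -/
theorem lintegral_enorm_fourier_sq {E : Type*} [NormedAddCommGroup E] [InnerProductSpace ℝ E]
    [FiniteDimensional ℝ E] [MeasurableSpace E] [BorelSpace E] {F : E → ℂ}
    (hF : Integrable F) (hF2 : MemLp F 2) :
    ∫⁻ x, ‖𝓕 F x‖ₑ ^ 2 = ∫⁻ x, ‖F x‖ₑ ^ 2 := by
  have h : eLpNorm (𝓕 F) 2 volume = eLpNorm F 2 volume := by
    rw [← eLpNorm_congr_ae (fourier_toLp_ae_eq hF hF2), ← Lp.enorm_def,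
      ← ofReal_norm, Lp.norm_fourier_eq, ofReal_norm, Lp.enorm_def,
      eLpNorm_congr_ae hF2.coeFn_toLp]
  rw [← eLpNorm_two_sq, h, eLpNorm_two_sq]

end Plancherel

section FourierConvention

open FourierTransform

variable {n : ℕ}

local notation "ℝⁿ" => EuclideanSpace ℝ (Fin n)

theorem lintegral_comp_smul_left (ψ : ℝⁿ → ENNReal) {r : ℝ} (hr : 0 < r) :
    ∫⁻ z, ψ (r • z) = ENNReal.ofReal (r ^ (-(n : ℝ))) * ∫⁻ z, ψ z := by
  have he : MeasurableEmbedding (fun z : ℝⁿ => r • z) :=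
    (Homeomorph.smulOfNeZero r hr.ne').measurableEmbedding
  rw [← he.lintegral_map ψ, Measure.map_addHaar_smul volume hr.ne', lintegral_smul_measure,
    finrank_euclideanSpace_fin, abs_of_pos (by positivity), Real.rpow_neg hr.le,
    Real.rpow_natCast, smul_eq_mul]

theorem IFT_eq_fourier (F : ℝⁿ → ℂ) (x : ℝⁿ) :
    IFT n F x = ((2 * π) ^ (-(n : ℝ) / 2) : ℝ) • 𝓕 F ((2 * π)⁻¹ • (-x)) := by
  rw [IFT, Real.fourier_eq']
  congr 2 with ξ
  rw [smul_eq_mul]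
  congr 2
  rw [inner_smul_right, inner_neg_right, real_inner_comm]
  have : (π : ℂ) ≠ 0 := by exact_mod_cast Real.pi_ne_zero
  push_cast
  field_simp

theorem FT_eq_IFT_neg (f : ℝⁿ → ℂ) (ξ : ℝⁿ) : FT n f ξ = IFT n f (-ξ) := by
  rw [FT, IFT]
  congr 2 with x
  rw [inner_neg_left, real_inner_comm]
  push_cast
  ring_nf

theorem IFT_of_not_integrable {F : ℝⁿ → ℂ} (hF : ¬ Integrable F) (x : ℝⁿ) : IFT n F x = 0 := by
  rw [IFT_eq_fourier, Real.fourier_eq, integral_undef, smul_zero]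
  rwa [Real.fourierIntegral_convergent_iff]

theorem continuous_IFT {F : ℝⁿ → ℂ} (hF : Integrable F) : Continuous (IFT n F) := by
  have hcont : Continuous (𝓕 F) :=
    VectorFourier.fourierIntegral_continuous Real.continuous_fourierChar
      (by exact continuous_inner) hF
  simp_rw [funext (IFT_eq_fourier F)]
  fun_prop

theorem continuous_FT {f : ℝⁿ → ℂ} (hf : Integrable f) : Continuous (FT n f) := by
  simp_rw [funext (FT_eq_IFT_neg f)]
  exact (continuous_IFT hf).comp continuous_neg

/-- The inverse Fourier integral is an `L²` contraction. -/
theorem lintegral_enorm_IFT_sq_le (F : ℝⁿ → ℂ) :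
    ∫⁻ x, ‖IFT n F x‖ₑ ^ 2 ≤ ∫⁻ x, ‖F x‖ₑ ^ 2 := by
  by_cases hF : Integrable F
  swap
  · simp [IFT_of_not_integrable hF]
  by_cases hF2 : ∫⁻ x, ‖F x‖ₑ ^ 2 = ⊤
  · simp [hF2]
  have hmem : MemLp F 2 := by
    refine ⟨hF.aestronglyMeasurable, ?_⟩
    rw [← eLpNorm_two_sq] at hF2
    exact lt_top_iff_ne_top.2 fun h => hF2 (by simp [h])
  have hpi : (0 : ℝ) < 2 * π := by positivity
  have hscale : ∫⁻ x : ℝⁿ, ‖𝓕 F ((2 * π)⁻¹ • (-x))‖ₑ ^ 2 =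
      ENNReal.ofReal ((2 * π) ^ (n : ℝ)) * ∫⁻ x, ‖𝓕 F x‖ₑ ^ 2 := by
    rw [lintegral_neg_eq_self (fun x : ℝⁿ => ‖𝓕 F ((2 * π)⁻¹ • x)‖ₑ ^ 2),
      lintegral_comp_smul_left (fun x : ℝⁿ => ‖𝓕 F x‖ₑ ^ 2) (inv_pos.2 hpi), Real.inv_rpow hpi.le,
      ← Real.rpow_neg hpi.le, neg_neg]
  simp_rw [IFT_eq_fourier, enorm_smul, mul_pow]
  rw [lintegral_const_mul' _ _ (by finiteness), hscale, ← mul_assoc,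
    Real.enorm_of_nonneg (by positivity), ← ENNReal.ofReal_pow (by positivity),
    ← ENNReal.ofReal_mul (by positivity), ← Real.rpow_natCast, ← Real.rpow_mul hpi.le,
    ← Real.rpow_add hpi, lintegral_enorm_fourier_sq hF hmem]
  simp

theorem lintegral_enorm_FT_sq_le (f : ℝⁿ → ℂ) :
    ∫⁻ x, ‖FT n f x‖ₑ ^ 2 ≤ ∫⁻ x, ‖f x‖ₑ ^ 2 := by
  simp_rw [FT_eq_IFT_neg]
  rw [lintegral_neg_eq_self (fun x : ℝⁿ => ‖IFT n f x‖ₑ ^ 2)]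
  exact lintegral_enorm_IFT_sq_le f

theorem integrable_exp_inner_mul {F : ℝⁿ → ℂ} (hF : Integrable F) (x : ℝⁿ) :
    Integrable fun ξ => Complex.exp (Complex.I * ((⟪x, ξ⟫ : ℝ) : ℂ)) * F ξ := by
  refine hF.bdd_mul (c := 1) (by fun_prop) (ae_of_all _ fun ξ => ?_)
  rw [mul_comm, Complex.norm_exp_ofReal_mul_I]

theorem integrable_exp_neg_inner_mul {F : ℝⁿ → ℂ} (hF : Integrable F) (x : ℝⁿ) :
    Integrable fun ξ => Complex.exp (-Complex.I * ((⟪ξ, x⟫ : ℝ) : ℂ)) * F ξ := by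
  refine (integrable_exp_inner_mul hF (-x)).congr (ae_of_all _ fun ξ => ?_)
  simp [real_inner_comm]

/-- The inverse Fourier integral turns differences into multiplications. -/
theorem IFT_sub_translate {F : ℝⁿ → ℂ} (hF : Integrable F) (z x : ℝⁿ) :
    IFT n (fun ξ => F (ξ + z) - F ξ) x =
      (Complex.exp (-Complex.I * ((⟪x, z⟫ : ℝ) : ℂ)) - 1) * IFT n F x := by
  have h1 : ∫ ξ : ℝⁿ, Complex.exp (Complex.I * ((⟪x, ξ⟫ : ℝ) : ℂ)) * F (ξ + z) =
      Complex.exp (-Complex.I * ((⟪x, z⟫ : ℝ) : ℂ)) *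
        ∫ ξ : ℝⁿ, Complex.exp (Complex.I * ((⟪x, ξ⟫ : ℝ) : ℂ)) * F ξ := by
    rw [← integral_const_mul, ← integral_add_right_eq_self (fun ξ : ℝⁿ =>
      Complex.exp (-Complex.I * ((⟪x, z⟫ : ℝ) : ℂ)) *
        (Complex.exp (Complex.I * ((⟪x, ξ⟫ : ℝ) : ℂ)) * F ξ)) z]
    congr 1 with ξ
    rw [← mul_assoc, ← Complex.exp_add, inner_add_right]
    push_cast
    ring_nf
  simp only [IFT, mul_sub]
  rw [integral_sub (integrable_exp_inner_mul (hF.comp_add_right z) x)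
    (integrable_exp_inner_mul hF x), h1]
  simp only [Complex.real_smul]
  ring

/-- Differences of the Fourier integral are Fourier integrals. -/
theorem FT_translate_sub {f : ℝⁿ → ℂ} (hf : Integrable f) (z ξ : ℝⁿ) :
    FT n f (ξ + z) - FT n f ξ =
      FT n (fun x => (Complex.exp (-Complex.I * ((⟪x, z⟫ : ℝ) : ℂ)) - 1) * f x) ξ := by
  rw [FT, FT, FT, ← smul_sub, ← integral_sub (integrable_exp_neg_inner_mul hf _)
    (integrable_exp_neg_inner_mul hf _)]
  congr 2 with x
  rw [← sub_mul, ← mul_assoc, mul_sub, ← Complex.exp_add, inner_add_right]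
  push_cast
  ring_nf

theorem FT_second_difference {f : ℝⁿ → ℂ} (hf : Integrable f) (z ξ : ℝⁿ) :
    FT n f (ξ + (2 : ℝ) • z) - 2 * FT n f (ξ + z) + FT n f ξ =
      FT n (fun x => (Complex.exp (-Complex.I * ((⟪x, z⟫ : ℝ) : ℂ)) - 1) ^ 2 * f x) ξ := by
  have hf' : Integrable fun x => (Complex.exp (-Complex.I * ((⟪x, z⟫ : ℝ) : ℂ)) - 1) * f x := by
    simpa only [sub_mul, one_mul] using! (integrable_exp_neg_inner_mul hf z).sub hf
  have h := FT_translate_sub hf' z ξ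
  rw [← FT_translate_sub hf, ← FT_translate_sub hf] at h
  simp only [← mul_assoc, ← pow_two] at h
  rw [← h, two_smul, add_assoc]
  ring

end FourierConvention

section RieszKernel

variable {n : ℕ} {δ : ℝ}

local notation "ℝⁿ" => EuclideanSpace ℝ (Fin n)

/-- The kernel `|z|^{-n-2δ}` of the Gagliardo seminorm of order `δ`. -/
def gagliardoKernel (n : ℕ) (δ : ℝ) (z : EuclideanSpace ℝ (Fin n)) : ENNReal :=
  ENNReal.ofReal (‖z‖ ^ (-((n : ℝ) + 2 * δ)))

@[fun_prop]
theorem measurable_gagliardoKernel : Measurable (gagliardoKernel n δ) := by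
  unfold gagliardoKernel
  fun_prop

theorem lintegral_comp_smul_mul_gagliardoKernel (ψ : ℝⁿ → ENNReal) {r : ℝ} (hr : 0 < r) :
    ∫⁻ z, ψ (r • z) * gagliardoKernel n δ z =
      ENNReal.ofReal (r ^ (2 * δ)) * ∫⁻ z, ψ z * gagliardoKernel n δ z := by
  have hk : ∀ z : ℝⁿ, gagliardoKernel n δ z =
      ENNReal.ofReal (r ^ ((n : ℝ) + 2 * δ)) * gagliardoKernel n δ (r • z) := fun z => by
    rw [gagliardoKernel, gagliardoKernel, ← ENNReal.ofReal_mul (by positivity), norm_smul,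
      Real.norm_of_nonneg hr.le, Real.mul_rpow hr.le (norm_nonneg _), ← mul_assoc,
      ← Real.rpow_add hr]
    simp
  calc ∫⁻ z, ψ (r • z) * gagliardoKernel n δ z
      = ∫⁻ z, ENNReal.ofReal (r ^ ((n : ℝ) + 2 * δ)) *
          (ψ (r • z) * gagliardoKernel n δ (r • z)) := by
        refine lintegral_congr fun z => ?_
        rw [hk z]
        ring
    _ = _ := by
        rw [lintegral_const_mul' _ _ (by finiteness),
          lintegral_comp_smul_left (fun z => ψ z * gagliardoKernel n δ z) hr, ← mul_assoc,
          ← ENNReal.ofReal_mul (by positivity), ← Real.rpow_add hr]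
        congr 3
        ring

theorem lintegral_ball_norm_rpow_lt_top (hn : n ≠ 0) {s : ℝ} (hs : -(n : ℝ) < s) :
    ∫⁻ z : ℝⁿ in Metric.ball 0 1, ENNReal.ofReal (‖z‖ ^ s) < ⊤ := by
  have : Nontrivial ℝⁿ := Module.nontrivial_of_finrank_pos (R := ℝ) (by simp; omega)
  have h : IntegrableOn (fun z : ℝⁿ => ‖z‖ ^ s) (Metric.ball 0 1) := by
    rw [integrableOn_fun_norm_addHaar volume (f := fun y : ℝ => y ^ s)]
    have h1 : IntegrableOn (fun y : ℝ => y ^ ((n : ℝ) - 1 + s)) (Set.Ioo 0 1) :=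
      (intervalIntegral.integrableOn_Ioo_rpow_iff one_pos).2 (by linarith)
    refine h1.congr_fun (fun y hy => ?_) measurableSet_Ioo
    beta_reduce
    rw [finrank_euclideanSpace_fin, smul_eq_mul, Real.rpow_add hy.1, ← Real.rpow_natCast,
      Nat.cast_sub (by omega), Nat.cast_one]
  exact h.lintegral_lt_top

theorem lintegral_gagliardoKernel_compl_ball_lt_top (hδ : 0 < δ) :
    ∫⁻ z : ℝⁿ in (Metric.ball 0 1)ᶜ, gagliardoKernel n δ z < ⊤ := by
  have hfin := finite_integral_one_add_norm (E := ℝⁿ) (μ := volume) (r := n + 2 * δ)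
    (by simpa using hδ)
  calc ∫⁻ z : ℝⁿ in (Metric.ball 0 1)ᶜ, gagliardoKernel n δ z
      ≤ ∫⁻ z : ℝⁿ in (Metric.ball 0 1)ᶜ, ENNReal.ofReal (2 ^ ((n : ℝ) + 2 * δ)) *
          ENNReal.ofReal ((1 + ‖z‖) ^ (-((n : ℝ) + 2 * δ))) := by
        refine setLIntegral_mono' Metric.isOpen_ball.measurableSet.compl fun z hz => ?_
        have hz : 1 ≤ ‖z‖ := by simpa using hz
        rw [← ENNReal.ofReal_mul (by positivity), gagliardoKernel]
        refine ENNReal.ofReal_le_ofReal ?_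
        rw [Real.rpow_neg (by positivity), Real.rpow_neg (by positivity), ← div_eq_mul_inv,
          ← Real.div_rpow (by positivity) (by positivity), ← Real.inv_rpow (by positivity)]
        refine Real.rpow_le_rpow (by positivity) ?_ (by positivity)
        rw [inv_le_comm₀ (by positivity) (by positivity), inv_div]
        linarith
    _ ≤ ∫⁻ z : ℝⁿ, ENNReal.ofReal (2 ^ ((n : ℝ) + 2 * δ)) *
          ENNReal.ofReal ((1 + ‖z‖) ^ (-((n : ℝ) + 2 * δ))) := setLIntegral_le_lintegral _ _
    _ < ⊤ := by
        rw [lintegral_const_mul' _ _ (by finiteness)]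
        exact ENNReal.mul_lt_top (by finiteness) hfin

theorem lintegral_min_mul_gagliardoKernel_lt_top (hn : n ≠ 0) {m : ℕ} (hδ : 0 < δ) (hm : δ < m) :
    ∫⁻ z : ℝⁿ, ENNReal.ofReal (min 1 (‖z‖ ^ (2 * m))) * gagliardoKernel n δ z < ⊤ := by
  rw [← lintegral_add_compl _ (Metric.isOpen_ball (x := (0 : ℝⁿ)) (ε := 1)).measurableSet]
  refine ENNReal.add_lt_top.2 ⟨?_, ?_⟩
  · refine lt_of_le_of_lt ?_ (lintegral_ball_norm_rpow_lt_top hn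
      (s := 2 * m - (n + 2 * δ)) (by linarith))
    refine lintegral_mono fun z => ?_
    rw [gagliardoKernel, ← ENNReal.ofReal_mul (by positivity)]
    refine ENNReal.ofReal_le_ofReal ?_
    rcases eq_or_ne z 0 with rfl | hz
    · have : m ≠ 0 := by rintro rfl; simp at hm; linarith
      simp [this]
      positivity
    · have hz : 0 < ‖z‖ := norm_pos_iff.2 hz
      rw [sub_eq_add_neg, Real.rpow_add hz]
      refine mul_le_mul_of_nonneg_right ((min_le_right _ _).trans_eq ?_) (by positivity)
      rw [← Real.rpow_natCast]
      push_cast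
      rfl
  · refine lt_of_le_of_lt ?_ (lintegral_gagliardoKernel_compl_ball_lt_top (n := n) hδ)
    refine lintegral_mono fun z => mul_le_of_le_one_left' ?_
    exact ENNReal.ofReal_le_one.2 (min_le_left _ _)

theorem lintegral_min_norm_mul_mul_gagliardoKernel {m : ℕ} {r : ℝ} (hr : 0 < r) :
    ∫⁻ z : ℝⁿ, ENNReal.ofReal (min 1 ((r * ‖z‖) ^ (2 * m))) * gagliardoKernel n δ z =
      ENNReal.ofReal (r ^ (2 * δ)) *
        ∫⁻ z : ℝⁿ, ENNReal.ofReal (min 1 (‖z‖ ^ (2 * m))) * gagliardoKernel n δ z := by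
  rw [← lintegral_comp_smul_mul_gagliardoKernel _ hr]
  simp [norm_smul, abs_of_pos hr]

theorem norm_exp_sub_one_le_two_mul_min (x z : ℝⁿ) :
    ‖Complex.exp (-Complex.I * ((⟪x, z⟫ : ℝ) : ℂ)) - 1‖ ≤ 2 * min 1 (‖x‖ * ‖z‖) := by
  have he : -Complex.I * ((⟪x, z⟫ : ℝ) : ℂ) = Complex.I * ((-⟪x, z⟫ : ℝ) : ℂ) := by
    push_cast
    ring
  rw [he, mul_min_of_nonneg _ _ zero_le_two, le_min_iff]
  constructor
  · refine (norm_sub_le _ _).trans ?_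
    rw [mul_comm, Complex.norm_exp_ofReal_mul_I, norm_one]
    norm_num
  · refine Real.norm_exp_I_mul_ofReal_sub_one_le.trans ?_
    rw [norm_neg]
    have := norm_inner_le_norm (𝕜 := ℝ) x z
    have : 0 ≤ ‖x‖ * ‖z‖ := by positivity
    linarith

theorem half_abs_le_norm_exp_sub_one {θ : ℝ} (hθ : |θ| ≤ 1) :
    |θ| / 2 ≤ ‖Complex.exp (-Complex.I * (θ : ℂ)) - 1‖ := by
  have him : (Complex.exp (-Complex.I * (θ : ℂ)) - 1).im = -Real.sin θ := by
    rw [show -Complex.I * (θ : ℂ) = ((-θ : ℝ) : ℂ) * Complex.I by push_cast; ring,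
      Complex.sub_im, Complex.exp_ofReal_mul_I_im, Complex.one_im, sub_zero, Real.sin_neg]
  have h1 : |θ| / 2 ≤ |Real.sin θ| := by
    refine le_trans ?_ (Real.mul_abs_le_abs_sin (hθ.trans (by linarith [Real.pi_gt_three])))
    have : (1 : ℝ) / 2 ≤ 2 / π := by
      rw [div_le_div_iff₀ (by norm_num) Real.pi_pos]
      linarith [Real.pi_le_four]
    nlinarith [abs_nonneg θ]
  refine h1.trans ?_
  have := Complex.abs_im_le_norm (Complex.exp (-Complex.I * (θ : ℂ)) - 1)
  rwa [him, abs_neg] at this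

/-- Upper bound for the symbol of the Gagliardo seminorm. -/
theorem lintegral_enorm_exp_sub_one_pow_mul_gagliardoKernel_le {m : ℕ} (hm : m ≠ 0) (x : ℝⁿ) :
    ∫⁻ z : ℝⁿ, ‖Complex.exp (-Complex.I * ((⟪x, z⟫ : ℝ) : ℂ)) - 1‖ₑ ^ (2 * m) *
        gagliardoKernel n δ z ≤
      ENNReal.ofReal (‖x‖ ^ (2 * δ)) * (2 ^ (2 * m) *
        ∫⁻ z : ℝⁿ, ENNReal.ofReal (min 1 (‖z‖ ^ (2 * m))) * gagliardoKernel n δ z) := by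
  rcases eq_or_ne x 0 with rfl | hx
  · simp [hm]
  have hx : 0 < ‖x‖ := norm_pos_iff.2 hx
  rw [mul_left_comm, ← lintegral_min_norm_mul_mul_gagliardoKernel hx,
    ← lintegral_const_mul' _ _ (by finiteness)]
  refine lintegral_mono fun z => ?_
  rw [← mul_assoc]
  refine mul_le_mul_left ?_ _
  rw [← ofReal_norm, ← ENNReal.ofReal_pow (norm_nonneg _),
    show (2 : ENNReal) ^ (2 * m) = ENNReal.ofReal (2 ^ (2 * m)) by simp [ENNReal.ofReal_pow],
    ← ENNReal.ofReal_mul (by positivity)]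
  refine ENNReal.ofReal_le_ofReal ?_
  refine (pow_le_pow_left₀ (norm_nonneg _) (norm_exp_sub_one_le_two_mul_min x z) _).trans ?_
  rw [mul_pow]
  refine mul_le_mul_of_nonneg_left (le_min ?_ ?_) (by positivity)
  · exact pow_le_one₀ (by positivity) (min_le_left _ _)
  · exact pow_le_pow_left₀ (by positivity) (min_le_right _ _) _

variable (n) in
/-- Lower bound for the symbol of the Gagliardo seminorm. -/
theorem exists_le_lintegral_enorm_exp_sub_one_sq_mul_gagliardoKernel (hδ : 0 < δ) :
    ∃ c > 0, ∀ x : ℝⁿ, ENNReal.ofReal c * ENNReal.ofReal (‖x‖ ^ (2 * δ)) ≤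
      ∫⁻ z : ℝⁿ, ‖Complex.exp (-Complex.I * ((⟪x, z⟫ : ℝ) : ℂ)) - 1‖ₑ ^ 2 *
        gagliardoKernel n δ z := by
  set v : ℝ := volume.real (Metric.ball (0 : ℝⁿ) 1) with hv
  have hvpos : 0 < v := by
    rw [hv, Measure.real, ENNReal.toReal_pos_iff]
    exact ⟨Metric.measure_ball_pos _ _ one_pos, measure_ball_lt_top⟩
  refine ⟨(1 / 8) ^ 2 * ((1 / 4) ^ n * v), by positivity, fun x => ?_⟩
  rcases eq_or_ne x 0 with rfl | hx
  · simp [hδ.ne']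
  have hx : 0 < ‖x‖ := norm_pos_iff.2 hx
  set B : Set ℝⁿ := Metric.ball ((2 * ‖x‖ ^ 2)⁻¹ • x) (4 * ‖x‖)⁻¹ with hB
  have hvol : volume B = ENNReal.ofReal ((4 * ‖x‖)⁻¹ ^ n * v) := by
    rw [hB, Measure.addHaar_ball_of_pos _ _ (by positivity), finrank_euclideanSpace_fin,
      ENNReal.ofReal_mul (by positivity), hv, Measure.real,
      ENNReal.ofReal_toReal measure_ball_lt_top.ne]
  have hpt : ∀ z ∈ B, ENNReal.ofReal ((1 / 8) ^ 2 * ‖x‖ ^ ((n : ℝ) + 2 * δ)) ≤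
      ‖Complex.exp (-Complex.I * ((⟪x, z⟫ : ℝ) : ℂ)) - 1‖ₑ ^ 2 * gagliardoKernel n δ z := by
    intro z hz
    rw [hB, Metric.mem_ball, dist_eq_norm] at hz
    have hcen : ⟪x, (2 * ‖x‖ ^ 2)⁻¹ • x⟫ = (1 / 2 : ℝ) := by
      rw [inner_smul_right, real_inner_self_eq_norm_sq]
      field_simp
    have hin : |⟪x, z⟫ - 1 / 2| ≤ 1 / 4 := by
      rw [← hcen, ← inner_sub_right]
      refine (abs_real_inner_le_norm _ _).trans ?_
      calc ‖x‖ * ‖z - (2 * ‖x‖ ^ 2)⁻¹ • x‖ ≤ ‖x‖ * (4 * ‖x‖)⁻¹ := by gcongr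
        _ = 1 / 4 := by field_simp
    rw [abs_le] at hin
    have hθ : |⟪x, z⟫| ≤ 1 := abs_le.2 ⟨by linarith, by linarith⟩
    have hexp := half_abs_le_norm_exp_sub_one hθ
    rw [abs_of_pos (by linarith)] at hexp
    have hzpos : 0 < ‖z‖ := norm_pos_iff.2 (by rintro rfl; simp at hin; linarith)
    have hz1 : ‖z‖ ≤ ‖x‖⁻¹ := by
      have h1 := norm_sub_norm_le z ((2 * ‖x‖ ^ 2)⁻¹ • x)
      have h2 : ‖(2 * ‖x‖ ^ 2)⁻¹ • x‖ = 1 / 2 * ‖x‖⁻¹ := by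
        rw [norm_smul, Real.norm_of_nonneg (by positivity)]
        field_simp
      rw [h2] at h1
      rw [mul_inv 4] at hz
      have : 0 < ‖x‖⁻¹ := by positivity
      linarith
    rw [gagliardoKernel, ← ofReal_norm, ← ENNReal.ofReal_pow (norm_nonneg _),
      ← ENNReal.ofReal_mul (by positivity)]
    refine ENNReal.ofReal_le_ofReal (mul_le_mul ?_ ?_ (by positivity) (by positivity))
    · exact pow_le_pow_left₀ (by norm_num) (by linarith) _
    · rw [Real.rpow_neg hzpos.le, ← Real.inv_rpow hzpos.le]
      exact Real.rpow_le_rpow hx.le ((le_inv_comm₀ hzpos hx).1 hz1) (by positivity)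
  calc ENNReal.ofReal ((1 / 8) ^ 2 * ((1 / 4) ^ n * v)) * ENNReal.ofReal (‖x‖ ^ (2 * δ))
      = ENNReal.ofReal ((1 / 8) ^ 2 * ‖x‖ ^ ((n : ℝ) + 2 * δ)) * volume B := by
        rw [hvol, ← ENNReal.ofReal_mul (by positivity), ← ENNReal.ofReal_mul (by positivity),
          Real.rpow_add hx, Real.rpow_natCast, mul_inv, mul_pow, inv_pow ‖x‖]
        congr 1
        field_simp
    _ = ∫⁻ _ in B, ENNReal.ofReal ((1 / 8) ^ 2 * ‖x‖ ^ ((n : ℝ) + 2 * δ)) := by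
        rw [setLIntegral_const]
    _ ≤ ∫⁻ z in B, ‖Complex.exp (-Complex.I * ((⟪x, z⟫ : ℝ) : ℂ)) - 1‖ₑ ^ 2 *
          gagliardoKernel n δ z := setLIntegral_mono' Metric.isOpen_ball.measurableSet hpt
    _ ≤ _ := setLIntegral_le_lintegral _ _

end RieszKernel

section Hardy

variable {n : ℕ} {δ : ℝ}

local notation "ℝⁿ" => EuclideanSpace ℝ (Fin n)

theorem lintegral_lintegral_enorm_exp_sub_one_pow_swap {H : ℝⁿ → ENNReal} (hH : Measurable H)
    (m : ℕ) :
    ∫⁻ z : ℝⁿ, (∫⁻ x : ℝⁿ, ‖Complex.exp (-Complex.I * ((⟪x, z⟫ : ℝ) : ℂ)) - 1‖ₑ ^ m * H x) *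
        gagliardoKernel n δ z =
      ∫⁻ x : ℝⁿ, (∫⁻ z : ℝⁿ, ‖Complex.exp (-Complex.I * ((⟪x, z⟫ : ℝ) : ℂ)) - 1‖ₑ ^ m *
        gagliardoKernel n δ z) * H x := by
  have h1 : ∀ z : ℝⁿ, Measurable fun x : ℝⁿ =>
      ‖Complex.exp (-Complex.I * ((⟪x, z⟫ : ℝ) : ℂ)) - 1‖ₑ ^ m * H x := fun z => by fun_prop
  have h2 : ∀ x : ℝⁿ, Measurable fun z : ℝⁿ =>
      ‖Complex.exp (-Complex.I * ((⟪x, z⟫ : ℝ) : ℂ)) - 1‖ₑ ^ m * gagliardoKernel n δ z :=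
    fun x => by fun_prop
  simp_rw [← lintegral_mul_const _ (h1 _), ← lintegral_mul_const _ (h2 _)]
  rw [lintegral_lintegral_swap (by fun_prop)]
  simp_rw [mul_right_comm]

/-- The Gagliardo kernel restricted to `|η| ≤ ε |z|`. -/
def coneKernel (n : ℕ) (δ ε : ℝ) (η z : EuclideanSpace ℝ (Fin n)) : ENNReal :=
  open Classical in if ‖η‖ ≤ ε * ‖z‖ then gagliardoKernel n δ z else 0

@[fun_prop]
theorem Measurable.coneKernel {α : Type*} [MeasurableSpace α] {ε : ℝ} {u v : α → ℝⁿ}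
    (hu : Measurable u) (hv : Measurable v) :
    Measurable fun a => coneKernel n δ ε (u a) (v a) :=
  Measurable.ite (measurableSet_le (by fun_prop) (by fun_prop)) (by fun_prop) (by fun_prop)

theorem coneKernel_le {ε : ℝ} (η z : ℝⁿ) : coneKernel n δ ε η z ≤ gagliardoKernel n δ z := by
  unfold coneKernel
  split_ifs
  · exact le_rfl
  · exact zero_le

theorem le_lintegral_coneKernel (hδ : 0 < δ) {ε : ℝ} (hε : 0 < ε) (η : ℝⁿ) :
    ENNReal.ofReal (ε ^ (2 * δ)) * (∫⁻ z : ℝⁿ in (Metric.ball 0 1)ᶜ, gagliardoKernel n δ z) *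
      ENNReal.ofReal (‖η‖ ^ (-(2 * δ))) ≤ ∫⁻ z, coneKernel n δ ε η z := by
  rcases eq_or_ne η 0 with rfl | hη
  · simp [Real.zero_rpow, hδ.ne']
  have hη : 0 < ‖η‖ := norm_pos_iff.2 hη
  have hr : 0 < ε / ‖η‖ := by positivity
  have h := lintegral_comp_smul_mul_gagliardoKernel (n := n) (δ := δ)
    ((Metric.ball (0 : ℝⁿ) 1)ᶜ.indicator 1) hr
  have h1 : ∀ z : ℝⁿ, (Metric.ball (0 : ℝⁿ) 1)ᶜ.indicator 1 ((ε / ‖η‖) • z) *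
      gagliardoKernel n δ z = coneKernel n δ ε η z := fun z => by
    have : ((ε / ‖η‖) • z ∈ (Metric.ball (0 : ℝⁿ) 1)ᶜ) ↔ ‖η‖ ≤ ε * ‖z‖ := by
      rw [Set.mem_compl_iff, mem_ball_zero_iff, not_lt, norm_smul, Real.norm_of_nonneg hr.le,
        div_mul_eq_mul_div, le_div_iff₀ hη, one_mul]
    classical simp [coneKernel, Set.indicator_apply, this]
  have h2 : ∫⁻ z, (Metric.ball (0 : ℝⁿ) 1)ᶜ.indicator 1 z * gagliardoKernel n δ z =
      ∫⁻ z : ℝⁿ in (Metric.ball 0 1)ᶜ, gagliardoKernel n δ z := by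
    rw [← lintegral_indicator Metric.isOpen_ball.measurableSet.compl]
    classical simp [Set.indicator_apply]
  rw [lintegral_congr h1, h2] at h
  rw [h, mul_right_comm, ← ENNReal.ofReal_mul (by positivity), Real.div_rpow hε.le hη.le,
    Real.rpow_neg hη.le, div_eq_mul_inv]

theorem lintegral_coneKernel_sub_smul_le (hδ : 0 < δ) {ε a : ℝ} (hε : 0 < ε) (hε' : ε ≤ 1 / 2)
    (ha : 1 ≤ a) (ha' : a ≤ 2) (ξ : ℝⁿ) :
    ∫⁻ z, coneKernel n δ ε (ξ - a • z) z ≤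
      ENNReal.ofReal (4 ^ ((n : ℝ) + 2 * δ) * 2 ^ n * volume.real (Metric.ball (0 : ℝⁿ) 1) *
        ε ^ n) * ENNReal.ofReal (‖ξ‖ ^ (-(2 * δ))) := by
  set v : ℝ := volume.real (Metric.ball (0 : ℝⁿ) 1) with hv
  have hcone : ∀ z : ℝⁿ, ‖ξ - a • z‖ ≤ ε * ‖z‖ → ‖z‖ ≤ 2 * ‖ξ‖ ∧ ‖ξ‖ ≤ 4 * ‖z‖ := by
    intro z hz
    have h1 := norm_sub_norm_le (a • z) ξ
    have h2 := norm_sub_norm_le ξ (a • z)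
    rw [norm_sub_rev] at h1
    rw [norm_smul, Real.norm_of_nonneg (by linarith)] at h1 h2
    constructor <;> nlinarith [norm_nonneg z]
  rcases eq_or_ne ξ 0 with rfl | hξ
  · have : ∀ z : ℝⁿ, coneKernel n δ ε (0 - a • z) z = 0 := fun z => by
      unfold coneKernel
      split_ifs with hz
      · have hz0 : ‖z‖ = 0 := le_antisymm (by simpa using (hcone z hz).1) (norm_nonneg z)
        have : -((n : ℝ) + 2 * δ) ≠ 0 := neg_ne_zero.2 (by positivity)
        rw [gagliardoKernel, hz0, Real.zero_rpow this, ENNReal.ofReal_zero]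
      · rfl
    rw [lintegral_congr this]
    simp
  have hξ : 0 < ‖ξ‖ := norm_pos_iff.2 hξ
  set B : Set ℝⁿ := Metric.closedBall (a⁻¹ • ξ) (2 * ε * ‖ξ‖) with hB
  have hvol : volume B = ENNReal.ofReal ((2 * ε * ‖ξ‖) ^ n * v) := by
    rw [hB, Measure.addHaar_closedBall _ _ (by positivity), finrank_euclideanSpace_fin,
      ENNReal.ofReal_mul (by positivity), hv, Measure.real,
      ENNReal.ofReal_toReal measure_ball_lt_top.ne]
  have hpt : ∀ z, coneKernel n δ ε (ξ - a • z) z ≤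
      B.indicator (fun _ => ENNReal.ofReal ((‖ξ‖ / 4) ^ (-((n : ℝ) + 2 * δ)))) z := by
    intro z
    unfold coneKernel
    split_ifs with hz
    · obtain ⟨hz1, hz2⟩ := hcone z hz
      have hzB : z ∈ B := by
        rw [hB, Metric.mem_closedBall, dist_eq_norm, norm_sub_rev]
        have : a⁻¹ • ξ - z = a⁻¹ • (ξ - a • z) := by
          rw [smul_sub, smul_smul, inv_mul_cancel₀ (by positivity), one_smul]
        rw [this, norm_smul, norm_inv, Real.norm_of_nonneg (by linarith)]
        have hainv : a⁻¹ ≤ 1 := inv_le_one_of_one_le₀ ha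
        nlinarith [norm_nonneg (ξ - a • z)]
      rw [Set.indicator_of_mem hzB, gagliardoKernel]
      refine ENNReal.ofReal_le_ofReal ?_
      exact Real.rpow_le_rpow_of_nonpos (by positivity) (by linarith)
        (neg_nonpos.2 (by positivity))
    · exact zero_le
  refine (lintegral_mono hpt).trans_eq ?_
  rw [lintegral_indicator_const Metric.isClosed_closedBall.measurableSet, hvol,
    ← ENNReal.ofReal_mul (by positivity), ← ENNReal.ofReal_mul (by positivity),
    Real.div_rpow hξ.le (by norm_num), Real.rpow_neg (by norm_num : (0 : ℝ) ≤ 4), neg_add,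
    Real.rpow_add hξ, Real.rpow_neg hξ.le, Real.rpow_natCast]
  congr 1
  field_simp
  ring

theorem lintegral_lintegral_coneKernel_mul_translate_le (hδ : 0 < δ) {ε a : ℝ} (hε : 0 < ε)
    (hε' : ε ≤ 1 / 2) (ha : 1 ≤ a) (ha' : a ≤ 2) {G : ℝⁿ → ENNReal} (hG : Measurable G) :
    ∫⁻ η, ∫⁻ z, coneKernel n δ ε η z * G (η + a • z) ≤
      ENNReal.ofReal (4 ^ ((n : ℝ) + 2 * δ) * 2 ^ n * volume.real (Metric.ball (0 : ℝⁿ) 1) *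
        ε ^ n) * ∫⁻ ξ, G ξ * ENNReal.ofReal (‖ξ‖ ^ (-(2 * δ))) := by
  have hshift : ∀ z : ℝⁿ, ∫⁻ η, coneKernel n δ ε η z * G (η + a • z) =
      ∫⁻ ξ, coneKernel n δ ε (ξ - a • z) z * G ξ := fun z => by
    rw [← lintegral_add_right_eq_self (fun ξ => coneKernel n δ ε (ξ - a • z) z * G ξ) (a • z)]
    simp only [add_sub_cancel_right]
  rw [lintegral_lintegral_swap (by fun_prop), lintegral_congr hshift,
    lintegral_lintegral_swap (by fun_prop), ← lintegral_const_mul' _ _ (by finiteness)]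
  refine lintegral_mono fun ξ => ?_
  rw [lintegral_mul_const _ (by fun_prop), mul_left_comm, mul_comm]
  exact mul_le_mul_right (lintegral_coneKernel_sub_smul_le hδ hε hε' ha ha' ξ) _

theorem enorm_sq_le_second_difference (a b c : ℂ) :
    ‖a‖ₑ ^ 2 ≤ 12 * ‖b‖ₑ ^ 2 + 3 * ‖c‖ₑ ^ 2 + 3 * ‖c - 2 * b + a‖ₑ ^ 2 := by
  have h : ‖a‖ ≤ ‖c - 2 * b + a‖ + 2 * ‖b‖ + ‖c‖ := by
    calc ‖a‖ = ‖(c - 2 * b + a) + 2 * b - c‖ := by ring_nf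
      _ ≤ ‖c - 2 * b + a‖ + ‖2 * b‖ + ‖c‖ :=
        (norm_sub_le _ _).trans (by gcongr; exact norm_add_le _ _)
      _ = _ := by simp
  have h2 : ‖a‖ ^ 2 ≤ 12 * ‖b‖ ^ 2 + 3 * ‖c‖ ^ 2 + 3 * ‖c - 2 * b + a‖ ^ 2 := by
    refine (pow_le_pow_left₀ (norm_nonneg a) h 2).trans ?_
    nlinarith [sq_nonneg (‖c - 2 * b + a‖ - 2 * ‖b‖), sq_nonneg (‖c - 2 * b + a‖ - ‖c‖),
      sq_nonneg (2 * ‖b‖ - ‖c‖)]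
  have h3 := ENNReal.ofReal_le_ofReal h2
  rw [ENNReal.ofReal_add (by positivity) (by positivity),
    ENNReal.ofReal_add (by positivity) (by positivity)] at h3
  simpa [ENNReal.ofReal_mul, ENNReal.ofReal_pow] using h3

theorem ENNReal.le_of_absorb {A D : ENNReal} {a : ℝ} (ha : 0 < a) (hA : A ≠ ⊤)
    (h : ENNReal.ofReal a * A ≤ ENNReal.ofReal (a / 2) * A + D) :
    A ≤ ENNReal.ofReal (2 / a) * D := by
  have h1 : ENNReal.ofReal a * A = ENNReal.ofReal (a / 2) * A + ENNReal.ofReal (a / 2) * A := by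
    rw [← add_mul, ← ENNReal.ofReal_add (by positivity) (by positivity), add_halves]
  rw [h1] at h
  have h2 := ENNReal.le_of_add_le_add_left (by finiteness) h
  calc A = ENNReal.ofReal (2 / a) * (ENNReal.ofReal (a / 2) * A) := by
        rw [← mul_assoc, ← ENNReal.ofReal_mul (by positivity),
          show 2 / a * (a / 2) = 1 by field_simp]
        simp
    _ ≤ _ := by gcongr

theorem lintegral_enorm_FT_sq_mul_norm_rpow_ne_top (hn : n ≠ 0) (hδ : 0 < δ) (hδn : 2 * δ < n)
    {f : ℝⁿ → ℂ} (hf : Integrable f) (hf2 : ∫⁻ x, ‖f x‖ₑ ^ 2 ≠ ⊤) :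
    ∫⁻ ξ, ‖FT n f ξ‖ₑ ^ 2 * ENNReal.ofReal (‖ξ‖ ^ (-(2 * δ))) ≠ ⊤ := by
  rw [← lt_top_iff_ne_top,
    ← lintegral_add_compl _ (Metric.isOpen_ball (x := (0 : ℝⁿ)) (ε := 1)).measurableSet]
  refine ENNReal.add_lt_top.2 ⟨?_, ?_⟩
  · set K : ENNReal := ‖((2 * π) ^ (-(n : ℝ) / 2) : ℝ)‖ₑ * ∫⁻ x, ‖f x‖ₑ
    have hK : K ≠ ⊤ := ENNReal.mul_ne_top (by finiteness) hf.hasFiniteIntegral.ne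
    have hle : ∀ ξ, ‖FT n f ξ‖ₑ ≤ K := fun ξ => by
      rw [FT, enorm_smul]
      refine mul_le_mul_right ((enorm_integral_le_lintegral_enorm _).trans_eq ?_) _
      refine lintegral_congr fun x => ?_
      rw [enorm_mul, ← ofReal_norm,
        show -Complex.I * ((⟪x, ξ⟫ : ℝ) : ℂ) = ((-⟪x, ξ⟫ : ℝ) : ℂ) * Complex.I by
          push_cast; ring,
        Complex.norm_exp_ofReal_mul_I, ENNReal.ofReal_one, one_mul]
    calc ∫⁻ ξ in Metric.ball 0 1, ‖FT n f ξ‖ₑ ^ 2 * ENNReal.ofReal (‖ξ‖ ^ (-(2 * δ)))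
        ≤ ∫⁻ ξ : ℝⁿ in Metric.ball 0 1, K ^ 2 * ENNReal.ofReal (‖ξ‖ ^ (-(2 * δ))) := by
          refine lintegral_mono fun ξ => ?_
          gcongr
          exact hle ξ
      _ < ⊤ := by
          rw [lintegral_const_mul' _ _ (by finiteness)]
          exact ENNReal.mul_lt_top (by finiteness)
            (lintegral_ball_norm_rpow_lt_top hn (by linarith))
  · calc ∫⁻ ξ in (Metric.ball 0 1)ᶜ, ‖FT n f ξ‖ₑ ^ 2 * ENNReal.ofReal (‖ξ‖ ^ (-(2 * δ)))
        ≤ ∫⁻ ξ in (Metric.ball 0 1)ᶜ, ‖FT n f ξ‖ₑ ^ 2 := by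
          refine setLIntegral_mono' Metric.isOpen_ball.measurableSet.compl fun ξ hξ => ?_
          have hξ : 1 ≤ ‖ξ‖ := by simpa using hξ
          refine mul_le_of_le_one_right' (ENNReal.ofReal_le_one.2 ?_)
          exact Real.rpow_le_one_of_one_le_of_nonpos hξ (by linarith)
      _ ≤ ∫⁻ ξ, ‖FT n f ξ‖ₑ ^ 2 := setLIntegral_le_lintegral _ _
      _ ≤ ∫⁻ x, ‖f x‖ₑ ^ 2 := lintegral_enorm_FT_sq_le f
      _ < ⊤ := lt_top_iff_ne_top.2 hf2

theorem lintegral_gagliardoKernel_compl_ball_pos (hn : n ≠ 0) :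
    0 < ∫⁻ z : ℝⁿ in (Metric.ball 0 1)ᶜ, gagliardoKernel n δ z := by
  have : Nontrivial ℝⁿ := Module.nontrivial_of_finrank_pos (R := ℝ) (by simp; omega)
  rw [setLIntegral_pos_iff (by fun_prop)]
  obtain ⟨e, he⟩ := exists_norm_eq ℝⁿ (zero_le_two (α := ℝ))
  have hopen : IsOpen (Metric.closedBall (0 : ℝⁿ) 1)ᶜ := Metric.isClosed_closedBall.isOpen_compl
  refine (hopen.measure_pos volume ⟨e, by simp [he]⟩).trans_le (measure_mono fun z hz => ?_)
  have hz : 1 < ‖z‖ := by simpa using hz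
  refine ⟨?_, by simpa using hz.le⟩
  rw [Function.mem_support, gagliardoKernel, ne_eq, ENNReal.ofReal_eq_zero, not_le]
  positivity

variable (n) in
/-- Fractional Hardy inequality on the Fourier side. -/
theorem exists_lintegral_enorm_FT_sq_mul_norm_rpow_le (hn : n ≠ 0) (hδ : 0 < δ) (hδ2 : δ < 2)
    (hδn : 2 * δ < n) :
    ∃ C > 0, ∀ f : ℝⁿ → ℂ, Measurable f → Integrable f → ∫⁻ x, ‖f x‖ₑ ^ 2 ≠ ⊤ →
      ∫⁻ ξ, ‖FT n f ξ‖ₑ ^ 2 * ENNReal.ofReal (‖ξ‖ ^ (-(2 * δ))) ≤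
        ENNReal.ofReal C * ∫⁻ x, ENNReal.ofReal (‖x‖ ^ (2 * δ)) * ‖f x‖ₑ ^ 2 := by
  set c₁ : ℝ := (∫⁻ z : ℝⁿ in (Metric.ball 0 1)ᶜ, gagliardoKernel n δ z).toReal with hc₁
  have hc₁top := lintegral_gagliardoKernel_compl_ball_lt_top (n := n) hδ
  have hc₁pos : 0 < c₁ :=
    ENNReal.toReal_pos (lintegral_gagliardoKernel_compl_ball_pos hn).ne' hc₁top.ne
  set C₂ : ℝ := 4 ^ ((n : ℝ) + 2 * δ) * 2 ^ n * volume.real (Metric.ball (0 : ℝⁿ) 1) with hC₂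
  have hC₂nn : 0 ≤ C₂ := by positivity
  set Φ : ENNReal := 2 ^ (2 * 2) *
    ∫⁻ z : ℝⁿ, ENNReal.ofReal (min 1 (‖z‖ ^ (2 * 2))) * gagliardoKernel n δ z with hΦ
  have hΦtop : Φ ≠ ⊤ := ENNReal.mul_ne_top (by finiteness)
    (lintegral_min_mul_gagliardoKernel_lt_top hn (m := 2) hδ (by exact_mod_cast hδ2)).ne
  obtain ⟨ε, hε, hε', hεle⟩ : ∃ ε : ℝ, 0 < ε ∧ ε ≤ 1 / 2 ∧
      15 * (C₂ * ε ^ n) ≤ ε ^ (2 * δ) * c₁ / 2 := by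
    have hpos : (0 : ℝ) < n - 2 * δ := by linarith
    have ht : Filter.Tendsto (fun ε : ℝ => 30 * C₂ * ε ^ ((n : ℝ) - 2 * δ))
        (nhdsWithin 0 (Set.Ioi 0)) (nhds 0) := by
      have := ((Real.continuousAt_rpow_const 0 ((n : ℝ) - 2 * δ) (Or.inr hpos.le)).tendsto.const_mul
        (30 * C₂))
      rw [Real.zero_rpow hpos.ne', mul_zero] at this
      exact this.mono_left nhdsWithin_le_nhds
    obtain ⟨ε, h1, h2⟩ := ((ht.eventually (ge_mem_nhds hc₁pos)).and
      (Ioc_mem_nhdsGT (by norm_num : (0 : ℝ) < 1 / 2))).exists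
    refine ⟨ε, h2.1, h2.2, ?_⟩
    have h3 : ε ^ n = ε ^ (2 * δ) * ε ^ ((n : ℝ) - 2 * δ) := by
      rw [← Real.rpow_add h2.1, ← Real.rpow_natCast]
      congr 1
      ring
    have h4 : 0 < ε ^ (2 * δ) := Real.rpow_pos_of_pos h2.1 _
    rw [h3]
    nlinarith
  set a : ℝ := ε ^ (2 * δ) * c₁ with ha
  have hapos : 0 < a := by positivity
  refine ⟨2 / a * (3 * (Φ.toReal + 1)), by positivity, fun f hfm hf hf2 => ?_⟩
  have hFTm : Measurable (FT n f) := (continuous_FT hf).measurable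
  set g : ℝⁿ → ℂ := FT n f with hg
  set A : ENNReal := ∫⁻ ξ, ‖g ξ‖ₑ ^ 2 * ENNReal.ofReal (‖ξ‖ ^ (-(2 * δ))) with hA
  set R : ENNReal := ∫⁻ x, ENNReal.ofReal (‖x‖ ^ (2 * δ)) * ‖f x‖ₑ ^ 2 with hR
  have hlower : ENNReal.ofReal a * A ≤ ∫⁻ η, ∫⁻ z, coneKernel n δ ε η z * ‖g η‖ₑ ^ 2 := by
    rw [hA, ← lintegral_const_mul' _ _ (by finiteness)]
    refine lintegral_mono fun η => ?_
    rw [lintegral_mul_const _ (by fun_prop), mul_left_comm, mul_comm]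
    refine mul_le_mul_left ?_ _
    have := le_lintegral_coneKernel (n := n) hδ hε η
    rwa [← ENNReal.ofReal_toReal hc₁top.ne, ← hc₁, ← ENNReal.ofReal_mul (by positivity)] at this
  have hsecond : ∫⁻ η, ∫⁻ z, coneKernel n δ ε η z *
      ‖g (η + (2 : ℝ) • z) - 2 * g (η + z) + g η‖ₑ ^ 2 ≤ Φ * R := by
    calc ∫⁻ η, ∫⁻ z, coneKernel n δ ε η z *
          ‖g (η + (2 : ℝ) • z) - 2 * g (η + z) + g η‖ₑ ^ 2
        = ∫⁻ z, ∫⁻ η, coneKernel n δ ε η z *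
          ‖g (η + (2 : ℝ) • z) - 2 * g (η + z) + g η‖ₑ ^ 2 :=
          lintegral_lintegral_swap (by fun_prop)
      _ ≤ ∫⁻ z : ℝⁿ, (∫⁻ x : ℝⁿ, ‖Complex.exp (-Complex.I * ((⟪x, z⟫ : ℝ) : ℂ)) - 1‖ₑ ^ (2 * 2) *
            ‖f x‖ₑ ^ 2) * gagliardoKernel n δ z := by
          refine lintegral_mono fun z => ?_
          calc ∫⁻ η, coneKernel n δ ε η z *
                ‖g (η + (2 : ℝ) • z) - 2 * g (η + z) + g η‖ₑ ^ 2
              ≤ ∫⁻ η, gagliardoKernel n δ z *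
                ‖g (η + (2 : ℝ) • z) - 2 * g (η + z) + g η‖ₑ ^ 2 := by
                refine lintegral_mono fun η => ?_
                gcongr
                exact coneKernel_le η z
            _ ≤ _ := by
                rw [lintegral_const_mul _ (by fun_prop), mul_comm]
                refine mul_le_mul_left ?_ _
                simp_rw [hg, FT_second_difference hf]
                refine (lintegral_enorm_FT_sq_le _).trans_eq ?_
                simp_rw [enorm_mul, enorm_pow, mul_pow, pow_mul]
      _ = ∫⁻ x : ℝⁿ, (∫⁻ z : ℝⁿ, ‖Complex.exp (-Complex.I * ((⟪x, z⟫ : ℝ) : ℂ)) - 1‖ₑ ^ (2 * 2) *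
            gagliardoKernel n δ z) * ‖f x‖ₑ ^ 2 :=
          lintegral_lintegral_enorm_exp_sub_one_pow_swap (by fun_prop) _
      _ ≤ Φ * R := by
          rw [hR, ← lintegral_const_mul' _ _ hΦtop]
          refine lintegral_mono fun x => ?_
          rw [← mul_assoc, mul_comm Φ]
          exact mul_le_mul_left
            (lintegral_enorm_exp_sub_one_pow_mul_gagliardoKernel_le two_ne_zero x) _
  have hupper : ∫⁻ η, ∫⁻ z, coneKernel n δ ε η z * ‖g η‖ₑ ^ 2 ≤
      ENNReal.ofReal (a / 2) * A + 3 * (Φ * R) := by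
    have hone := lintegral_lintegral_coneKernel_mul_translate_le (n := n) (a := 1) hδ hε hε'
      le_rfl one_le_two (G := fun ξ => ‖g ξ‖ₑ ^ 2) (by fun_prop)
    have htwo := lintegral_lintegral_coneKernel_mul_translate_le (n := n) (a := 2) hδ hε hε'
      one_le_two le_rfl (G := fun ξ => ‖g ξ‖ₑ ^ 2) (by fun_prop)
    simp only [one_smul] at hone
    rw [← hA, ← hC₂] at hone htwo
    calc ∫⁻ η, ∫⁻ z, coneKernel n δ ε η z * ‖g η‖ₑ ^ 2
        ≤ ∫⁻ η, ∫⁻ z, (12 * (coneKernel n δ ε η z * ‖g (η + z)‖ₑ ^ 2) +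
            3 * (coneKernel n δ ε η z * ‖g (η + (2 : ℝ) • z)‖ₑ ^ 2) +
            3 * (coneKernel n δ ε η z *
              ‖g (η + (2 : ℝ) • z) - 2 * g (η + z) + g η‖ₑ ^ 2)) := by
          refine lintegral_mono fun η => lintegral_mono fun z => ?_
          refine (mul_le_mul_right (enorm_sq_le_second_difference (g η) (g (η + z))
            (g (η + (2 : ℝ) • z))) _).trans_eq ?_
          ring
      _ = 12 * (∫⁻ η, ∫⁻ z, coneKernel n δ ε η z * ‖g (η + z)‖ₑ ^ 2) +
            3 * (∫⁻ η, ∫⁻ z, coneKernel n δ ε η z * ‖g (η + (2 : ℝ) • z)‖ₑ ^ 2) +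
            3 * ∫⁻ η, ∫⁻ z, coneKernel n δ ε η z *
              ‖g (η + (2 : ℝ) • z) - 2 * g (η + z) + g η‖ₑ ^ 2 := by
          have hX : Measurable fun η => ∫⁻ z, coneKernel n δ ε η z * ‖g (η + z)‖ₑ ^ 2 :=
            Measurable.lintegral_prod_right (by fun_prop)
          have hY : Measurable fun η =>
              ∫⁻ z, coneKernel n δ ε η z * ‖g (η + (2 : ℝ) • z)‖ₑ ^ 2 :=
            Measurable.lintegral_prod_right (by fun_prop)
          have hin : ∀ η, ∫⁻ z, (12 * (coneKernel n δ ε η z * ‖g (η + z)‖ₑ ^ 2) +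
              3 * (coneKernel n δ ε η z * ‖g (η + (2 : ℝ) • z)‖ₑ ^ 2) +
              3 * (coneKernel n δ ε η z *
                ‖g (η + (2 : ℝ) • z) - 2 * g (η + z) + g η‖ₑ ^ 2)) =
              12 * (∫⁻ z, coneKernel n δ ε η z * ‖g (η + z)‖ₑ ^ 2) +
              3 * (∫⁻ z, coneKernel n δ ε η z * ‖g (η + (2 : ℝ) • z)‖ₑ ^ 2) +
              3 * ∫⁻ z, coneKernel n δ ε η z *
                ‖g (η + (2 : ℝ) • z) - 2 * g (η + z) + g η‖ₑ ^ 2 := fun η => by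
            rw [lintegral_add_left (by fun_prop), lintegral_add_left (by fun_prop),
              lintegral_const_mul' _ _ (by finiteness), lintegral_const_mul' _ _ (by finiteness),
              lintegral_const_mul' _ _ (by finiteness)]
          rw [lintegral_congr hin, lintegral_add_left (by fun_prop),
            lintegral_add_left (by fun_prop), lintegral_const_mul' _ _ (by finiteness),
            lintegral_const_mul' _ _ (by finiteness), lintegral_const_mul' _ _ (by finiteness)]
      _ ≤ 12 * (ENNReal.ofReal (C₂ * ε ^ n) * A) + 3 * (ENNReal.ofReal (C₂ * ε ^ n) * A) +
            3 * (Φ * R) := by gcongr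
      _ = ENNReal.ofReal (15 * (C₂ * ε ^ n)) * A + 3 * (Φ * R) := by
          rw [ENNReal.ofReal_mul (by norm_num : (0 : ℝ) ≤ 15), ENNReal.ofReal_ofNat]
          ring
      _ ≤ _ := by gcongr
  have hfin := ENNReal.le_of_absorb hapos
    (lintegral_enorm_FT_sq_mul_norm_rpow_ne_top hn hδ hδn hf hf2) (hlower.trans hupper)
  refine hfin.trans ?_
  rw [ENNReal.ofReal_mul (by positivity), ENNReal.ofReal_mul (by norm_num), ENNReal.ofReal_ofNat]
  simp only [mul_assoc]
  gcongr
  exact (ENNReal.ofReal_toReal hΦtop).symm.le.trans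
    (ENNReal.ofReal_le_ofReal (le_add_of_nonneg_right zero_le_one))

end Hardy

section Multiplier

variable {n : ℕ} {δ B : ℝ} {q : EuclideanSpace ℝ (Fin n) → ℂ}

local notation "ℝⁿ" => EuclideanSpace ℝ (Fin n)

theorem exists_norm_le_of_homogeneous (hq : ContinuousOn q {(0 : ℝⁿ)}ᶜ)
    (hhom : ∀ t : ℝ, 0 < t → ∀ ξ, q (t • ξ) = q ξ) : ∃ M > 0, ∀ ξ, ‖q ξ‖ ≤ M := by
  obtain ⟨M, hM⟩ := (isCompact_sphere (0 : ℝⁿ) 1).exists_bound_of_continuousOn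
    (hq.mono fun ξ hξ => by
      rintro rfl
      simp at hξ)
  refine ⟨max 1 (max M ‖q 0‖), by positivity, fun ξ => ?_⟩
  rcases eq_or_ne ξ 0 with rfl | hξ
  · simp
  · rw [← hhom ‖ξ‖⁻¹ (by positivity) ξ]
    refine (hM _ ?_).trans (by simp)
    simp [norm_smul, norm_ne_zero_iff.2 hξ]

/-- A smooth symbol, homogeneous of degree zero, has differences controlled by the relative size
of the increment. -/
theorem exists_norm_sub_le_of_homogeneous (hq : ContDiffOn ℝ (⊤ : ℕ∞) q {(0 : ℝⁿ)}ᶜ)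
    (hhom : ∀ t : ℝ, 0 < t → ∀ ξ, q (t • ξ) = q ξ) :
    ∃ B > 0, (∀ ξ, ‖q ξ‖ ≤ B) ∧
      ∀ ξ ≠ 0, ∀ z, ‖q (ξ + z) - q ξ‖ ≤ B * min 1 (‖ξ‖⁻¹ * ‖z‖) := by
  obtain ⟨M, hMpos, hM⟩ := exists_norm_le_of_homogeneous hq.continuousOn hhom
  have hopen : IsOpen {(0 : ℝⁿ)}ᶜ := isOpen_compl_singleton
  have hcompact : IsCompact (Metric.closedBall (0 : ℝⁿ) 2 ∩ (Metric.ball (0 : ℝⁿ) (1 / 2))ᶜ) :=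
    (isCompact_closedBall _ _).inter_right Metric.isOpen_ball.isClosed_compl
  obtain ⟨L, hL⟩ := hcompact.exists_bound_of_continuousOn
    ((hq.continuousOn_fderiv_of_isOpen hopen (by simp)).mono fun ξ hξ => by
      rintro rfl
      simp at hξ)
  have hunit : ∀ ξ : ℝⁿ, ‖ξ‖ = 1 → ∀ z : ℝⁿ, ‖z‖ < 1 / 2 → ‖q (ξ + z) - q ξ‖ ≤ |L| * ‖z‖ := by
    intro ξ hξ z hz
    have hball : ∀ y ∈ Metric.ball ξ (1 / 2), 1 / 2 < ‖y‖ ∧ ‖y‖ ≤ 2 := by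
      intro y hy
      rw [mem_ball_iff_norm] at hy
      constructor
      · linarith [norm_sub_norm_le ξ y, norm_sub_rev y ξ]
      · linarith [norm_sub_norm_le y ξ]
    have h := (convex_ball ξ (1 / 2)).norm_image_sub_le_of_norm_fderiv_le (𝕜 := ℝ) (f := q)
      (C := |L|) (x := ξ) (y := ξ + z) (fun y hy => ?_) (fun y hy => ?_) (by simp)
      (by simpa using hz)
    · simpa using h
    · have hy0 : y ∈ ({0}ᶜ : Set ℝⁿ) := by
        rintro rfl
        simpa using (hball _ hy).1.trans' (by norm_num : (0 : ℝ) < 1 / 2)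
      exact (hq.contDiffAt (hopen.mem_nhds hy0)).differentiableAt (by simp)
    · refine (hL y ⟨?_, ?_⟩).trans (le_abs_self L)
      · simpa using (hball y hy).2
      · simpa using (hball y hy).1.le
  refine ⟨4 * M + |L|, by positivity, fun ξ => ?_, fun ξ hξ z => ?_⟩
  · linarith [hM ξ, abs_nonneg L]
  have hξpos : 0 < ‖ξ‖ := norm_pos_iff.2 hξ
  have h2M : ‖q (ξ + z) - q ξ‖ ≤ 2 * M := by
    linarith [norm_sub_le (q (ξ + z)) (q ξ), hM (ξ + z), hM ξ]
  rw [mul_min_of_nonneg _ _ (by positivity), le_min_iff]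
  refine ⟨by linarith [abs_nonneg L], ?_⟩
  rcases lt_or_ge (‖ξ‖⁻¹ * ‖z‖) (1 / 2) with hz | hz
  · have h := hunit (‖ξ‖⁻¹ • ξ) (by simp [norm_smul, hξpos.ne']) (‖ξ‖⁻¹ • z)
      (by simpa [norm_smul] using hz)
    rw [← smul_add, hhom _ (by positivity), hhom _ (by positivity), norm_smul, norm_inv,
      norm_norm] at h
    refine h.trans ?_
    gcongr
    linarith
  · nlinarith [abs_nonneg L]

theorem enorm_add_sq_le (a b : ℂ) : ‖a + b‖ₑ ^ 2 ≤ 2 * ‖a‖ₑ ^ 2 + 2 * ‖b‖ₑ ^ 2 := by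
  have h : ‖a + b‖ ^ 2 ≤ 2 * ‖a‖ ^ 2 + 2 * ‖b‖ ^ 2 :=
    (pow_le_pow_left₀ (norm_nonneg _) (norm_add_le a b) 2).trans
      (by nlinarith [sq_nonneg (‖a‖ - ‖b‖)])
  have h' := ENNReal.ofReal_le_ofReal h
  rw [ENNReal.ofReal_add (by positivity) (by positivity), ENNReal.ofReal_mul zero_le_two,
    ENNReal.ofReal_mul zero_le_two, ENNReal.ofReal_pow (norm_nonneg _),
    ENNReal.ofReal_pow (norm_nonneg _), ENNReal.ofReal_pow (norm_nonneg _)] at h'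
  simpa using h'

theorem measurable_mult (f : ℝⁿ → ℂ) : Measurable (mult n q f) := by
  by_cases hF : Integrable fun ξ => q ξ * FT n f ξ
  · exact (continuous_IFT hF).measurable
  · rw [show mult n q f = fun _ => 0 from funext (IFT_of_not_integrable hF)]
    exact measurable_const

theorem lintegral_enorm_mult_sq_le (hB : ∀ ξ, ‖q ξ‖ ≤ B) (f : ℝⁿ → ℂ) :
    ∫⁻ x, ‖mult n q f x‖ₑ ^ 2 ≤ ENNReal.ofReal B ^ 2 * ∫⁻ x, ‖f x‖ₑ ^ 2 := by
  refine (lintegral_enorm_IFT_sq_le _).trans ?_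
  refine le_trans ?_ (mul_le_mul_right (lintegral_enorm_FT_sq_le f) _)
  rw [← lintegral_const_mul' _ _ (by finiteness)]
  refine lintegral_mono fun ξ => ?_
  rw [enorm_mul, mul_pow]
  gcongr
  rw [← ofReal_norm]
  exact ENNReal.ofReal_le_ofReal (hB ξ)

/-- Differences of `q(D) f` on the Fourier side, by the discrete product rule. -/
theorem lintegral_enorm_exp_sub_one_sq_mul_mult_le (hB : ∀ ξ, ‖q ξ‖ ≤ B)
    (hB' : ∀ ξ ≠ 0, ∀ z, ‖q (ξ + z) - q ξ‖ ≤ B * min 1 (‖ξ‖⁻¹ * ‖z‖)) (hn : n ≠ 0)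
    {f : ℝⁿ → ℂ} (hf : Integrable f) (z : ℝⁿ) :
    ∫⁻ x : ℝⁿ, ‖Complex.exp (-Complex.I * ((⟪x, z⟫ : ℝ) : ℂ)) - 1‖ₑ ^ 2 * ‖mult n q f x‖ₑ ^ 2 ≤
      2 * ENNReal.ofReal B ^ 2 *
        ((∫⁻ x : ℝⁿ, ‖Complex.exp (-Complex.I * ((⟪x, z⟫ : ℝ) : ℂ)) - 1‖ₑ ^ 2 * ‖f x‖ₑ ^ 2) +
          ∫⁻ ξ : ℝⁿ, ENNReal.ofReal (min 1 ((‖ξ‖⁻¹ * ‖z‖) ^ 2)) * ‖FT n f ξ‖ₑ ^ 2) := by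
  have : Nonempty (Fin n) := ⟨⟨0, Nat.pos_of_ne_zero hn⟩⟩
  by_cases hF : Integrable fun ξ => q ξ * FT n f ξ
  swap
  · simp [mult, IFT_of_not_integrable hF]
  have hg : Continuous (FT n f) := continuous_FT hf
  have hqB : ∀ ξ, ‖q ξ‖ₑ ≤ ENNReal.ofReal B := fun ξ => by
    rw [← ofReal_norm]
    exact ENNReal.ofReal_le_ofReal (hB ξ)
  have hpt : ∀ ξ ≠ 0, ‖q (ξ + z) * FT n f (ξ + z) - q ξ * FT n f ξ‖ₑ ^ 2 ≤
      2 * ENNReal.ofReal B ^ 2 * (‖FT n f (ξ + z) - FT n f ξ‖ₑ ^ 2 +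
        ENNReal.ofReal (min 1 ((‖ξ‖⁻¹ * ‖z‖) ^ 2)) * ‖FT n f ξ‖ₑ ^ 2) := by
    intro ξ hξ
    have hd : ‖q (ξ + z) - q ξ‖ₑ ^ 2 ≤
        ENNReal.ofReal B ^ 2 * ENNReal.ofReal (min 1 ((‖ξ‖⁻¹ * ‖z‖) ^ 2)) := by
      have hmin : min 1 ((‖ξ‖⁻¹ * ‖z‖) ^ 2) = min 1 (‖ξ‖⁻¹ * ‖z‖) ^ 2 := by
        rcases le_total 1 (‖ξ‖⁻¹ * ‖z‖) with h | h
        · rw [min_eq_left h, min_eq_left (one_le_pow₀ h), one_pow]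
        · rw [min_eq_right h, min_eq_right (pow_le_one₀ (by positivity) h)]
      rw [hmin, ENNReal.ofReal_pow (by positivity), ← mul_pow,
        ← ENNReal.ofReal_mul ((norm_nonneg _).trans (hB 0)), ← ofReal_norm]
      gcongr
      exact hB' ξ hξ z
    calc ‖q (ξ + z) * FT n f (ξ + z) - q ξ * FT n f ξ‖ₑ ^ 2
        = ‖q (ξ + z) * (FT n f (ξ + z) - FT n f ξ) + (q (ξ + z) - q ξ) * FT n f ξ‖ₑ ^ 2 := by
          ring_nf
      _ ≤ 2 * (‖q (ξ + z)‖ₑ ^ 2 * ‖FT n f (ξ + z) - FT n f ξ‖ₑ ^ 2) +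
            2 * (‖q (ξ + z) - q ξ‖ₑ ^ 2 * ‖FT n f ξ‖ₑ ^ 2) := by
          simpa only [enorm_mul, mul_pow] using enorm_add_sq_le
            (q (ξ + z) * (FT n f (ξ + z) - FT n f ξ)) ((q (ξ + z) - q ξ) * FT n f ξ)
      _ ≤ 2 * (ENNReal.ofReal B ^ 2 * ‖FT n f (ξ + z) - FT n f ξ‖ₑ ^ 2) +
            2 * (ENNReal.ofReal B ^ 2 * ENNReal.ofReal (min 1 ((‖ξ‖⁻¹ * ‖z‖) ^ 2)) *
              ‖FT n f ξ‖ₑ ^ 2) := by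
          gcongr
          exact hqB _
      _ = _ := by ring
  calc ∫⁻ x : ℝⁿ, ‖Complex.exp (-Complex.I * ((⟪x, z⟫ : ℝ) : ℂ)) - 1‖ₑ ^ 2 * ‖mult n q f x‖ₑ ^ 2
      = ∫⁻ x, ‖IFT n (fun ξ => q (ξ + z) * FT n f (ξ + z) - q ξ * FT n f ξ) x‖ₑ ^ 2 := by
        refine lintegral_congr fun x => ?_
        rw [IFT_sub_translate hF z x, enorm_mul, mul_pow, mult]
    _ ≤ ∫⁻ ξ, ‖q (ξ + z) * FT n f (ξ + z) - q ξ * FT n f ξ‖ₑ ^ 2 := lintegral_enorm_IFT_sq_le _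
    _ ≤ ∫⁻ ξ : ℝⁿ, 2 * ENNReal.ofReal B ^ 2 * (‖FT n f (ξ + z) - FT n f ξ‖ₑ ^ 2 +
          ENNReal.ofReal (min 1 ((‖ξ‖⁻¹ * ‖z‖) ^ 2)) * ‖FT n f ξ‖ₑ ^ 2) :=
        lintegral_mono_ae ((ae_iff.2 (by simp) : ∀ᵐ ξ : ℝⁿ, ξ ≠ 0).mono hpt)
    _ = 2 * ENNReal.ofReal B ^ 2 * ((∫⁻ ξ, ‖FT n f (ξ + z) - FT n f ξ‖ₑ ^ 2) +
          ∫⁻ ξ : ℝⁿ, ENNReal.ofReal (min 1 ((‖ξ‖⁻¹ * ‖z‖) ^ 2)) * ‖FT n f ξ‖ₑ ^ 2) := by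
        rw [lintegral_const_mul' _ _ (by finiteness), lintegral_add_left (by fun_prop)]
    _ ≤ _ := by
        simp_rw [FT_translate_sub hf z, ← mul_pow, ← enorm_mul]
        exact mul_le_mul_right (add_le_add_left (lintegral_enorm_FT_sq_le _) _) _

theorem exists_lintegral_norm_rpow_mul_enorm_mult_sq_le_of_lt_one (hn : n ≠ 0) (hδ : 0 < δ)
    (hδ1 : δ < 1) (hδn : 2 * δ < n) (hB : ∀ ξ, ‖q ξ‖ ≤ B)
    (hB' : ∀ ξ ≠ 0, ∀ z, ‖q (ξ + z) - q ξ‖ ≤ B * min 1 (‖ξ‖⁻¹ * ‖z‖)) :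
    ∃ C > 0, ∀ f : ℝⁿ → ℂ, Measurable f → Integrable f → ∫⁻ x, ‖f x‖ₑ ^ 2 ≠ ⊤ →
      ∫⁻ x, ENNReal.ofReal (‖x‖ ^ (2 * δ)) * ‖mult n q f x‖ₑ ^ 2 ≤
        ENNReal.ofReal C * ∫⁻ x, ENNReal.ofReal (‖x‖ ^ (2 * δ)) * ‖f x‖ₑ ^ 2 := by
  have : Nonempty (Fin n) := ⟨⟨0, Nat.pos_of_ne_zero hn⟩⟩
  obtain ⟨c, hc, hlow⟩ := exists_le_lintegral_enorm_exp_sub_one_sq_mul_gagliardoKernel (n := n) hδ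
  obtain ⟨H, hH, hardy⟩ :=
    exists_lintegral_enorm_FT_sq_mul_norm_rpow_le n hn hδ (hδ1.trans one_lt_two) hδn
  set Φ := ∫⁻ z : ℝⁿ, ENNReal.ofReal (min 1 (‖z‖ ^ (2 * 1))) * gagliardoKernel n δ z with hΦdef
  have hΦ : Φ ≠ ⊤ :=
    (lintegral_min_mul_gagliardoKernel_lt_top hn (m := 1) hδ (by simpa using hδ1)).ne
  refine ⟨c⁻¹ * (2 * B ^ 2 * ((4 + H) * Φ.toReal)) + 1, ?_, fun f hfm hf hf2 => ?_⟩
  · positivity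
  set N := ∫⁻ x, ENNReal.ofReal (‖x‖ ^ (2 * δ)) * ‖f x‖ₑ ^ 2 with hN
  have hg : Continuous (FT n f) := continuous_FT hf
  have hu : Measurable (mult n q f) := measurable_mult f
  have hB0 : 0 ≤ B := (norm_nonneg _).trans (hB 0)
  have hleft : ENNReal.ofReal c * ∫⁻ x, ENNReal.ofReal (‖x‖ ^ (2 * δ)) * ‖mult n q f x‖ₑ ^ 2 ≤
      ∫⁻ z : ℝⁿ, (∫⁻ x : ℝⁿ, ‖Complex.exp (-Complex.I * ((⟪x, z⟫ : ℝ) : ℂ)) - 1‖ₑ ^ 2 *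
        ‖mult n q f x‖ₑ ^ 2) * gagliardoKernel n δ z := by
    rw [lintegral_lintegral_enorm_exp_sub_one_pow_swap (by fun_prop),
      ← lintegral_const_mul' _ _ (by finiteness)]
    refine lintegral_mono fun x => ?_
    rw [← mul_assoc]
    gcongr
    exact hlow x
  have hfirst : ∫⁻ z : ℝⁿ, (∫⁻ x : ℝⁿ,
      ‖Complex.exp (-Complex.I * ((⟪x, z⟫ : ℝ) : ℂ)) - 1‖ₑ ^ 2 * ‖f x‖ₑ ^ 2) *
        gagliardoKernel n δ z ≤ 4 * Φ * N := by
    rw [lintegral_lintegral_enorm_exp_sub_one_pow_swap (by fun_prop), hN,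
      ← lintegral_const_mul' _ _ (by finiteness)]
    refine lintegral_mono fun x => ?_
    refine (mul_le_mul_left (lintegral_enorm_exp_sub_one_pow_mul_gagliardoKernel_le
      (m := 1) one_ne_zero x) _).trans_eq ?_
    rw [← hΦdef]
    norm_num
    ring
  have hsecond : ∫⁻ z : ℝⁿ, (∫⁻ ξ : ℝⁿ, ENNReal.ofReal (min 1 ((‖ξ‖⁻¹ * ‖z‖) ^ 2)) *
      ‖FT n f ξ‖ₑ ^ 2) * gagliardoKernel n δ z ≤ Φ * (ENNReal.ofReal H * N) := by
    calc ∫⁻ z : ℝⁿ, (∫⁻ ξ : ℝⁿ, ENNReal.ofReal (min 1 ((‖ξ‖⁻¹ * ‖z‖) ^ 2)) *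
          ‖FT n f ξ‖ₑ ^ 2) * gagliardoKernel n δ z
        = ∫⁻ z : ℝⁿ, ∫⁻ ξ : ℝⁿ, ENNReal.ofReal (min 1 ((‖ξ‖⁻¹ * ‖z‖) ^ 2)) *
          ‖FT n f ξ‖ₑ ^ 2 * gagliardoKernel n δ z :=
          lintegral_congr fun z => (lintegral_mul_const _ (by fun_prop)).symm
      _ = ∫⁻ ξ : ℝⁿ, ∫⁻ z : ℝⁿ, ENNReal.ofReal (min 1 ((‖ξ‖⁻¹ * ‖z‖) ^ 2)) *
          ‖FT n f ξ‖ₑ ^ 2 * gagliardoKernel n δ z :=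
          lintegral_lintegral_swap (by fun_prop)
      _ = ∫⁻ ξ : ℝⁿ, Φ * (‖FT n f ξ‖ₑ ^ 2 * ENNReal.ofReal (‖ξ‖ ^ (-(2 * δ)))) := by
          refine lintegral_congr_ae ((ae_iff.2 (by simp) : ∀ᵐ ξ : ℝⁿ, ξ ≠ 0).mono fun ξ hξ => ?_)
          have hξ' : 0 < ‖ξ‖ := norm_pos_iff.2 hξ
          have h := lintegral_min_norm_mul_mul_gagliardoKernel (n := n) (δ := δ) (m := 1)
            (inv_pos.2 hξ')
          rw [← hΦdef, mul_one, Real.inv_rpow hξ'.le, ← Real.rpow_neg hξ'.le] at h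
          beta_reduce
          simp_rw [mul_right_comm _ (‖FT n f ξ‖ₑ ^ 2)]
          rw [lintegral_mul_const _ (by fun_prop), h]
          ring
      _ = Φ * ∫⁻ ξ : ℝⁿ, ‖FT n f ξ‖ₑ ^ 2 * ENNReal.ofReal (‖ξ‖ ^ (-(2 * δ))) :=
          lintegral_const_mul' _ _ hΦ
      _ ≤ _ := by
          gcongr
          exact hardy f hfm hf hf2
  have hmain : ENNReal.ofReal c *
      ∫⁻ x, ENNReal.ofReal (‖x‖ ^ (2 * δ)) * ‖mult n q f x‖ₑ ^ 2 ≤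
      2 * ENNReal.ofReal B ^ 2 * (4 * Φ * N + Φ * (ENNReal.ofReal H * N)) := by
    refine hleft.trans ?_
    refine (lintegral_mono fun z => mul_le_mul_left
      (lintegral_enorm_exp_sub_one_sq_mul_mult_le hB hB' hn hf z) _).trans ?_
    simp_rw [mul_assoc (2 * ENNReal.ofReal B ^ 2), add_mul]
    rw [lintegral_const_mul' _ _ (by finiteness), lintegral_add_right]
    · gcongr
    · have hgm : Measurable (FT n f) := hg.measurable
      exact (Measurable.lintegral_prod_right (by fun_prop)).mul (by fun_prop)
  have hc' : ENNReal.ofReal c⁻¹ * ENNReal.ofReal c = 1 := by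
    rw [← ENNReal.ofReal_mul (by positivity), inv_mul_cancel₀ hc.ne', ENNReal.ofReal_one]
  calc ∫⁻ x, ENNReal.ofReal (‖x‖ ^ (2 * δ)) * ‖mult n q f x‖ₑ ^ 2
      = ENNReal.ofReal c⁻¹ * (ENNReal.ofReal c *
        ∫⁻ x, ENNReal.ofReal (‖x‖ ^ (2 * δ)) * ‖mult n q f x‖ₑ ^ 2) := by
        rw [← mul_assoc, hc', one_mul]
    _ ≤ ENNReal.ofReal c⁻¹ *
        (2 * ENNReal.ofReal B ^ 2 * (4 * Φ * N + Φ * (ENNReal.ofReal H * N))) := by gcongr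
    _ = ENNReal.ofReal (c⁻¹ * (2 * B ^ 2 * ((4 + H) * Φ.toReal))) * N := by
        rw [ENNReal.ofReal_mul (by positivity), ENNReal.ofReal_mul (by positivity),
          ENNReal.ofReal_mul zero_le_two, ENNReal.ofReal_mul (by positivity),
          ENNReal.ofReal_add (by norm_num) hH.le, ENNReal.ofReal_toReal hΦ,
          ENNReal.ofReal_pow hB0, ENNReal.ofReal_ofNat, ENNReal.ofReal_ofNat]
        ring
    _ ≤ _ := by
        gcongr
        linarith

theorem exists_lintegral_norm_rpow_mul_enorm_mult_sq_le_one (hn : 3 ≤ n) (hB : ∀ ξ, ‖q ξ‖ ≤ B)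
    (hB' : ∀ ξ ≠ 0, ∀ z, ‖q (ξ + z) - q ξ‖ ≤ B * min 1 (‖ξ‖⁻¹ * ‖z‖)) :
    ∃ C > 0, ∀ f : ℝⁿ → ℂ, Measurable f → Integrable f → ∫⁻ x, ‖f x‖ₑ ^ 2 ≠ ⊤ →
      ∫⁻ x, ENNReal.ofReal (‖x‖ ^ (2 * (1 : ℝ))) * ‖mult n q f x‖ₑ ^ 2 ≤
        ENNReal.ofReal C * ∫⁻ x, ENNReal.ofReal (‖x‖ ^ (2 * (1 : ℝ))) * ‖f x‖ₑ ^ 2 := by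
  have hn0 : n ≠ 0 := by lia
  obtain ⟨H, hH, hardy⟩ := exists_lintegral_enorm_FT_sq_mul_norm_rpow_le n hn0 one_pos one_lt_two
    (by
      have : (3 : ℝ) ≤ n := by exact_mod_cast hn
      linarith)
  refine ⟨n * (4 * (2 * B ^ 2 * (4 + H))) + 1, by positivity, fun f hfm hf hf2 => ?_⟩
  set N := ∫⁻ x, ENNReal.ofReal (‖x‖ ^ (2 * (1 : ℝ))) * ‖f x‖ₑ ^ 2 with hN
  set K := 2 * ENNReal.ofReal B ^ 2 * (4 * N + ENNReal.ofReal H * N) with hK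
  have hB0 : 0 ≤ B := (norm_nonneg _).trans (hB 0)
  have hu : Measurable (mult n q f) := measurable_mult f
  let ζ (j : Fin n) (k : ℕ) : ℝⁿ := EuclideanSpace.single j ((k + 1 : ℝ)⁻¹)
  have hζ : ∀ j k, ‖ζ j k‖ = (k + 1 : ℝ)⁻¹ := fun j k => by
    simp [ζ, abs_of_pos (by positivity : (0 : ℝ) < k + 1)]
  have hinner : ∀ j k (x : ℝⁿ), ⟪x, ζ j k⟫ = (k + 1 : ℝ)⁻¹ * x j := fun j k x => by
    simp [ζ, EuclideanSpace.inner_single_right]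
  have hbound : ∀ j (k : ℕ), ∫⁻ x : ℝⁿ, ENNReal.ofReal ((k + 1 : ℝ) ^ 2) *
      (‖Complex.exp (-Complex.I * ((⟪x, ζ j k⟫ : ℝ) : ℂ)) - 1‖ₑ ^ 2 * ‖mult n q f x‖ₑ ^ 2) ≤
      K := by
    intro j k
    have hk : (0 : ℝ) < k + 1 := by positivity
    rw [lintegral_const_mul' _ _ (by finiteness)]
    refine (mul_le_mul_right
      (lintegral_enorm_exp_sub_one_sq_mul_mult_le hB hB' hn0 hf _) _).trans ?_
    rw [mul_left_comm, hK, mul_add, ← lintegral_const_mul' _ _ (by finiteness),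
      ← lintegral_const_mul' _ _ (by finiteness)]
    gcongr
    · rw [hN, ← lintegral_const_mul' _ _ (by finiteness)]
      refine lintegral_mono fun x => ?_
      rw [← mul_assoc, ← mul_assoc, ← ofReal_norm, ← ENNReal.ofReal_pow (norm_nonneg _),
        ← ENNReal.ofReal_mul (by positivity), ← ENNReal.ofReal_ofNat 4,
        ← ENNReal.ofReal_mul (by norm_num)]
      refine mul_le_mul_left (ENNReal.ofReal_le_ofReal ?_) _
      have h := (norm_exp_sub_one_le_two_mul_min x (ζ j k)).trans
        (mul_le_mul_of_nonneg_left (min_le_right _ _) zero_le_two)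
      rw [hζ] at h
      calc (k + 1 : ℝ) ^ 2 * ‖Complex.exp (-Complex.I * ((⟪x, ζ j k⟫ : ℝ) : ℂ)) - 1‖ ^ 2
          ≤ (k + 1 : ℝ) ^ 2 * (2 * (‖x‖ * (k + 1 : ℝ)⁻¹)) ^ 2 := by gcongr
        _ = 4 * ‖x‖ ^ (2 * (1 : ℝ)) := by
          rw [mul_one, Real.rpow_two]
          field_simp
          ring
    · refine le_trans (lintegral_mono fun ξ => ?_) (hardy f hfm hf hf2)
      rw [← mul_assoc, ← ENNReal.ofReal_mul (by positivity), mul_comm]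
      gcongr
      calc (k + 1 : ℝ) ^ 2 * min 1 ((‖ξ‖⁻¹ * ‖ζ j k‖) ^ 2)
          ≤ (k + 1 : ℝ) ^ 2 * (‖ξ‖⁻¹ * ‖ζ j k‖) ^ 2 := by gcongr; exact min_le_right _ _
        _ = ‖ξ‖ ^ (-(2 * (1 : ℝ))) := by
          rw [mul_one, Real.rpow_neg (norm_nonneg _), Real.rpow_two, hζ]
          field_simp
  have hcoord : ∀ j : Fin n, ∫⁻ x : ℝⁿ, ENNReal.ofReal (x j ^ 2) * ‖mult n q f x‖ₑ ^ 2 ≤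
      4 * K := by
    intro j
    have hfatou := lintegral_liminf_le (μ := (volume : Measure ℝⁿ)) (u := Filter.atTop)
      (f := fun (k : ℕ) (x : ℝⁿ) =>
      ENNReal.ofReal ((k + 1 : ℝ) ^ 2) *
      (‖Complex.exp (-Complex.I * ((⟪x, ζ j k⟫ : ℝ) : ℂ)) - 1‖ₑ ^ 2 * ‖mult n q f x‖ₑ ^ 2))
      (fun k => by fun_prop)
    have hK' := hfatou.trans (Filter.liminf_le_of_frequently_le'
      (Filter.Frequently.of_forall (hbound j)))
    refine le_trans ?_ (mul_le_mul_right hK' 4)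
    rw [← lintegral_const_mul' _ _ (by finiteness)]
    refine lintegral_mono fun x => ?_
    suffices h : ENNReal.ofReal (x j ^ 2 / 4) * ‖mult n q f x‖ₑ ^ 2 ≤
        Filter.liminf (fun k : ℕ => ENNReal.ofReal ((k + 1 : ℝ) ^ 2) *
          (‖Complex.exp (-Complex.I * ((⟪x, ζ j k⟫ : ℝ) : ℂ)) - 1‖ₑ ^ 2 *
            ‖mult n q f x‖ₑ ^ 2)) Filter.atTop by
      refine le_trans (le_of_eq ?_) (mul_le_mul_right h 4)
      rw [← mul_assoc, ← ENNReal.ofReal_ofNat 4, ← ENNReal.ofReal_mul (by norm_num)]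
      congr 2
      ring
    refine Filter.le_liminf_of_le (by isBoundedDefault) ?_
    filter_upwards [Filter.eventually_ge_atTop ⌈|x j|⌉₊] with k hk
    have hkpos : (0 : ℝ) < k + 1 := by positivity
    have hxk : |x j| ≤ k + 1 := by
      have : (⌈|x j|⌉₊ : ℝ) ≤ k := by exact_mod_cast hk
      linarith [Nat.le_ceil |x j|]
    rw [← mul_assoc, ← ofReal_norm (Complex.exp _ - 1), ← ENNReal.ofReal_pow (norm_nonneg _),
      ← ENNReal.ofReal_mul (by positivity)]
    refine mul_le_mul_left (ENNReal.ofReal_le_ofReal ?_) _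
    have h := half_abs_le_norm_exp_sub_one (θ := ⟪x, ζ j k⟫) (by
      rw [hinner, abs_mul, abs_of_pos (by positivity), inv_mul_le_iff₀ hkpos, mul_one]
      exact hxk)
    calc x j ^ 2 / 4 = (k + 1 : ℝ) ^ 2 * (|⟪x, ζ j k⟫| / 2) ^ 2 := by
          rw [div_pow, sq_abs, hinner]
          field_simp
          norm_num
      _ ≤ _ := by gcongr
  calc ∫⁻ x, ENNReal.ofReal (‖x‖ ^ (2 * (1 : ℝ))) * ‖mult n q f x‖ₑ ^ 2
      = ∫⁻ x : ℝⁿ, ∑ j, ENNReal.ofReal (x j ^ 2) * ‖mult n q f x‖ₑ ^ 2 := by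
        refine lintegral_congr fun x => ?_
        rw [mul_one, Real.rpow_two, EuclideanSpace.real_norm_sq_eq,
          ENNReal.ofReal_sum_of_nonneg fun j _ => sq_nonneg _, Finset.sum_mul]
    _ = ∑ j, ∫⁻ x : ℝⁿ, ENNReal.ofReal (x j ^ 2) * ‖mult n q f x‖ₑ ^ 2 :=
        lintegral_finsetSum _ fun j _ => by fun_prop
    _ ≤ ∑ _j : Fin n, 4 * K := Finset.sum_le_sum fun j _ => hcoord j
    _ = ENNReal.ofReal (n * (4 * (2 * B ^ 2 * (4 + H)))) * N := by
        rw [Finset.sum_const, Finset.card_univ, Fintype.card_fin, nsmul_eq_mul, hK,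
          ENNReal.ofReal_mul (by positivity), ENNReal.ofReal_mul (by positivity),
          ENNReal.ofReal_mul (by positivity), ENNReal.ofReal_mul zero_le_two,
          ENNReal.ofReal_add (by norm_num) hH.le,
          ENNReal.ofReal_pow hB0, ENNReal.ofReal_ofNat, ENNReal.ofReal_ofNat,
          ENNReal.ofReal_natCast]
        ring
    _ ≤ _ := by
        gcongr
        linarith

end Multiplier

theorem commutator_weight_multiplier (n : ℕ) (hn : 2 ≤ n) (δ : ℝ) (hδ0 : 0 < δ)
    (hδ1 : 3 ≤ n → δ ≤ 1) (hδ2 : n = 2 → δ < 1)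
    (q : EuclideanSpace ℝ (Fin n) → ℂ)
    (hq_smooth : ContDiffOn ℝ (⊤ : ℕ∞) q {(0 : EuclideanSpace ℝ (Fin n))}ᶜ)
    (hq_hom : ∀ t : ℝ, 0 < t → ∀ ξ, q (t • ξ) = q ξ) :
    ∃ C > 0, ∀ f : SchwartzMap (EuclideanSpace ℝ (Fin n)) ℂ,
      eLpNorm (fun x : EuclideanSpace ℝ (Fin n) =>
          ((‖x‖ ^ δ : ℝ) : ℂ) * mult n q (fun y => f y) x -
            mult n q (fun y => ((‖y‖ ^ δ : ℝ) : ℂ) * f y) x) 2 volume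
        ≤ ENNReal.ofReal C *
            eLpNorm (fun x : EuclideanSpace ℝ (Fin n) => ((‖x‖ ^ δ : ℝ) : ℂ) * f x) 2 volume := by
  have hδle : δ ≤ 1 := by
    rcases hn.eq_or_lt with h | h
    · exact (hδ2 h.symm).le
    · exact hδ1 h
  have hn0 : n ≠ 0 := by lia
  obtain ⟨B, hBpos, hB, hB'⟩ := exists_norm_sub_le_of_homogeneous hq_smooth hq_hom
  have hweighted : ∃ C > 0, ∀ f : EuclideanSpace ℝ (Fin n) → ℂ, Measurable f → Integrable f →
      ∫⁻ x, ‖f x‖ₑ ^ 2 ≠ ⊤ →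
      ∫⁻ x, ENNReal.ofReal (‖x‖ ^ (2 * δ)) * ‖mult n q f x‖ₑ ^ 2 ≤
        ENNReal.ofReal C * ∫⁻ x, ENNReal.ofReal (‖x‖ ^ (2 * δ)) * ‖f x‖ₑ ^ 2 := by
    rcases hδle.lt_or_eq with h | rfl
    · have hn' : (2 : ℝ) ≤ n := by exact_mod_cast hn
      exact exists_lintegral_norm_rpow_mul_enorm_mult_sq_le_of_lt_one hn0 hδ0 h (by linarith) hB hB'
    · refine exists_lintegral_norm_rpow_mul_enorm_mult_sq_le_one ?_ hB hB'
      by_contra hlt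
      exact lt_irrefl _ (hδ2 (by lia))
  obtain ⟨C, hC, hweighted⟩ := hweighted
  refine ⟨√(2 * C + 2 * B ^ 2), by positivity, fun f => ?_⟩
  have hweight : ∀ (x : EuclideanSpace ℝ (Fin n)) (w : ℂ),
      ‖((‖x‖ ^ δ : ℝ) : ℂ) * w‖ₑ ^ 2 = ENNReal.ofReal (‖x‖ ^ (2 * δ)) * ‖w‖ₑ ^ 2 := by
    intro x w
    rw [enorm_mul, mul_pow, ← ofReal_norm, Complex.norm_real, Real.norm_of_nonneg (by positivity),
      ← ENNReal.ofReal_pow (by positivity), ← Real.rpow_mul_natCast (norm_nonneg _), mul_comm δ]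
    norm_num
  have hf2 : ∫⁻ x, ‖f x‖ₑ ^ 2 ≠ ⊤ := by
    rw [← eLpNorm_two_sq]
    exact ENNReal.pow_ne_top (f.memLp 2 volume).eLpNorm_ne_top
  have h1 := hweighted (fun y => f y) f.continuous.measurable f.integrable hf2
  have h2 := lintegral_enorm_mult_sq_le hB fun y => ((‖y‖ ^ δ : ℝ) : ℂ) * f y
  rw [← ENNReal.pow_le_pow_left_iff two_ne_zero, mul_pow, eLpNorm_two_sq, eLpNorm_two_sq,
    ← ENNReal.ofReal_pow (by positivity), Real.sq_sqrt (by positivity)]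
  simp_rw [hweight] at h2 ⊢
  calc _ ≤ ∫⁻ x, (2 * (ENNReal.ofReal (‖x‖ ^ (2 * δ)) * ‖mult n q (fun y => f y) x‖ₑ ^ 2) +
        2 * ‖mult n q (fun y => ((‖y‖ ^ δ : ℝ) : ℂ) * f y) x‖ₑ ^ 2) := by
        refine lintegral_mono fun x => ?_
        have h := enorm_add_sq_le (((‖x‖ ^ δ : ℝ) : ℂ) * mult n q (fun y => f y) x)
          (-mult n q (fun y => ((‖y‖ ^ δ : ℝ) : ℂ) * f y) x)
        rwa [← sub_eq_add_neg, enorm_neg, hweight] at h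
    _ = 2 * (∫⁻ x, ENNReal.ofReal (‖x‖ ^ (2 * δ)) * ‖mult n q (fun y => f y) x‖ₑ ^ 2) +
        2 * ∫⁻ x, ‖mult n q (fun y => ((‖y‖ ^ δ : ℝ) : ℂ) * f y) x‖ₑ ^ 2 := by
        have := measurable_mult (q := q) fun y => ((‖y‖ ^ δ : ℝ) : ℂ) * f y
        rw [lintegral_add_right _ (by fun_prop), lintegral_const_mul' _ _ (by finiteness),
          lintegral_const_mul' _ _ (by finiteness)]
    _ ≤ 2 * (ENNReal.ofReal C * ∫⁻ x, ENNReal.ofReal (‖x‖ ^ (2 * δ)) * ‖f x‖ₑ ^ 2) +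
        2 * (ENNReal.ofReal B ^ 2 * ∫⁻ x, ENNReal.ofReal (‖x‖ ^ (2 * δ)) * ‖f x‖ₑ ^ 2) := by
        gcongr
    _ = _ := by
        rw [ENNReal.ofReal_add (by positivity) (by positivity), ENNReal.ofReal_mul zero_le_two,
          ENNReal.ofReal_mul zero_le_two, ENNReal.ofReal_pow hBpos.le, ENNReal.ofReal_ofNat]
        ring
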